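/- arXiv:2404.18690 — 2 statements merged into one kernel-verified Lean document; each statement's English description precedes it below -/
import Mathlib

section
/- Suppose the pair (𝒫,𝒟) satisfies conditions (T1)–(T3), and let (n_k)_{k≥1} be a strictly increasing sequence of integers with n_k > 7 and Φ(n_k + 1) ≥ 3 for all k. Then there exists ε > 0 such that for every k ≥ 1, every ξ with |ξ| < 1, every σ ∈ {−1,1}^ℕ, every admissible α, and every λ ∈ Λ_{n_k}^{σ,α}, one has ∏_{j=2}^{∞} |m_{𝒟_{n_k+j}}((ξ + λ)/P_{n_k+j})| > ε. -/
open MeasureTheory Filter Finset Real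
open scoped ENNReal NNReal

noncomputable section

/-- `P n = p 1 * p 2 * ⋯ * p n`. -/
def Pprod (p : ℕ → ℕ) (n : ℕ) : ℕ := ∏ i ∈ Finset.Icc 1 n, p i

/-- The uniform probability measure on the finite set `s • E ⊆ ℝ`. -/
def unifD (E : Finset ℕ) (s : ℝ) : Measure ℝ :=
  (E.card : ℝ≥0∞)⁻¹ • ∑ d ∈ E, Measure.dirac (s * (d : ℝ))

/-- The finite convolutions `μ_n = δ_{P₁⁻¹D₁} ∗ ⋯ ∗ δ_{Pₙ⁻¹Dₙ}`. -/
def muN (p : ℕ → ℕ) (D : ℕ → Finset ℕ) : ℕ → Measure ℝ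
  | 0 => Measure.dirac 0
  | n + 1 => Measure.conv (muN p D n) (unifD (D (n + 1)) ((Pprod p (n + 1) : ℝ)⁻¹))

/-- `μ` is the weak limit of the sequence of measures `ν n`. -/
def IsWeakLimit (ν : ℕ → Measure ℝ) (μ : Measure ℝ) : Prop :=
  ∀ f : BoundedContinuousFunction ℝ ℝ,
    Tendsto (fun n => ∫ x, f x ∂ν n) atTop (nhds (∫ x, f x ∂μ))

/-- `μ` is the Moran measure attached to `(p, D)`: the infinite convolution
`δ_{P₁⁻¹D₁} ∗ δ_{P₂⁻¹D₂} ∗ ⋯`, in the sense of weak convergence. -/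
def IsMoran (p : ℕ → ℕ) (D : ℕ → Finset ℕ) (μ : Measure ℝ) : Prop :=
  IsProbabilityMeasure μ ∧ IsWeakLimit (muN p D) μ

/-- The exponentials `e_λ, λ ∈ Λ` are pairwise orthogonal in `L²(μ)`. -/
def IsOrthSet (μ : Measure ℝ) (Λ : Set ℝ) : Prop :=
  ∀ l ∈ Λ, ∀ l' ∈ Λ, l ≠ l' →
    ∫ x : ℝ, Complex.exp (2 * Real.pi * Complex.I * (l - l') * x) ∂μ = 0

/-- `Λ` is a spectrum of `μ`: the exponentials `e_λ, λ ∈ Λ` form an orthonormal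
basis of `L²(μ)` (orthonormal + maximal, i.e. complete). -/
def IsSpectrum (μ : Measure ℝ) (Λ : Set ℝ) : Prop :=
  IsOrthSet μ Λ ∧
  ∀ f : ℝ → ℂ, MemLp f 2 μ →
    (∀ l ∈ Λ, ∫ x : ℝ, f x * Complex.exp (-(2 * Real.pi * Complex.I * l * x)) ∂μ = 0) →
    f =ᵐ[μ] 0

def IsSpectralMeasure (μ : Measure ℝ) : Prop := ∃ Λ : Set ℝ, Λ.Countable ∧ IsSpectrum μ Λ

/-- Condition (T1): `D n = {0,1,…,N-1}` with `3 < N`, `N ∣ p n`, `N < p n`. -/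
def T1cond (p : ℕ → ℕ) (D : ℕ → Finset ℕ) (n : ℕ) : Prop :=
  ∃ N : ℕ, 3 < N ∧ N ∣ p n ∧ N < p n ∧ D n = Finset.range N

/-- Condition (T2) (except for the global sup condition): `D n = {0,a,b}`,
`0 < a < b`, `gcd(a,b) = 1`, `{a,b} ≡ {1,2} (mod 3)`, `3 ∣ p n`. -/
def T2cond (p : ℕ → ℕ) (D : ℕ → Finset ℕ) (n : ℕ) : Prop :=
  ∃ a b : ℕ, 0 < a ∧ a < b ∧ Nat.gcd a b = 1 ∧
    (a % 3 = 1 ∧ b % 3 = 2 ∨ a % 3 = 2 ∧ b % 3 = 1) ∧ 3 ∣ p n ∧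
    D n = ({0, a, b} : Finset ℕ)

/-- Condition (T3): `D n = {0,d}` with `0 < d < p n` and `p n / gcd (d, p n)` even.
(The decomposition `d = 2^l d'` with `d'` odd always exists, with `l` the 2-adic
valuation of `d`.) -/
def T3cond (p : ℕ → ℕ) (D : ℕ → Finset ℕ) (n : ℕ) : Prop :=
  ∃ d : ℕ, 0 < d ∧ d < p n ∧ 2 ∣ p n / Nat.gcd d (p n) ∧ D n = ({0, d} : Finset ℕ)

/-- The pair `(p, D)` satisfies conditions (T1)–(T3), including the requirement
`sup {b n / p n : n of type (T2)} < 2/3`. -/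
def SatisfiesT (p : ℕ → ℕ) (D : ℕ → Finset ℕ) : Prop :=
  (∀ n, 1 ≤ n → T1cond p D n ∨ T2cond p D n ∨ T3cond p D n) ∧
  ∃ c : ℝ, c < 2 / 3 ∧ ∀ n, 1 ≤ n → T2cond p D n → (((D n).sup id : ℕ) : ℝ) / (p n : ℝ) ≤ c

/-- `σ ∈ {-1,1}^ℕ`. -/
def IsSigma (σ : ℕ → ℤ) : Prop := ∀ n, σ n = 1 ∨ σ n = -1

/-- `α` is admissible: `α m ∈ {-⌊N/2⌋, …, N - 1 - ⌊N/2⌋}` where `N = #(D m)`,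
for every `m` with `#(D m) = N_m > 3`. -/
def Admissible (D : ℕ → Finset ℕ) (α : ℕ → ℤ) : Prop :=
  ∀ m, 1 ≤ m → 3 < (D m).card →
    -(((D m).card / 2 : ℕ) : ℤ) ≤ α m ∧
      α m ≤ ((D m).card : ℤ) - 1 - (((D m).card / 2 : ℕ) : ℤ)

/-- The largest element `d n` (resp. `b n`) of `D n`. -/
def bOf (D : ℕ → Finset ℕ) (n : ℕ) : ℕ := (D n).sup id

/-- The middle element `a n` of a digit set `{0, a, b}`. -/
def aOf (D : ℕ → Finset ℕ) (n : ℕ) : ℕ := (((D n).erase 0).erase ((D n).sup id)).sup id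

/-- `l n`: the 2-adic valuation of `d n`, i.e. `d n = 2^(l n) * d'` with `d'` odd. -/
def lOf (D : ℕ → Finset ℕ) (n : ℕ) : ℕ := padicValNat 2 ((D n).sup id)

/-- The finite set `Λ_n^{σ,α}`. -/
def LamN (p : ℕ → ℕ) (D : ℕ → Finset ℕ) (σ α : ℕ → ℤ) (n : ℕ) : Set ℝ :=
  { x | ∃ c : ℕ → ℝ,
      (∀ i, (D i).card = 2 → c i = 0 ∨ c i = (σ i : ℝ) / 2 ^ (1 + lOf D i)) ∧
      (∀ i, (D i).card = 3 → c i = 0 ∨ c i = 1 / 3 ∨ c i = -(1 / 3)) ∧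
      (∀ i, 3 < (D i).card → c i = (α i : ℝ) / ((D i).card : ℝ)) ∧
      x = ∑ i ∈ Finset.Icc 1 n, (Pprod p i : ℝ) * c i }

/-- `Λ^{σ,α} = ⋃_{n ≥ 1} Λ_n^{σ,α}`. -/
def Lam (p : ℕ → ℕ) (D : ℕ → Finset ℕ) (σ α : ℕ → ℤ) : Set ℝ :=
  ⋃ n ∈ Set.Ici 1, LamN p D σ α n

/-- The Fourier transform `μ̂(ξ) = ∫ e^{-2πixξ} dμ(x)`. -/
def FT (μ : Measure ℝ) (ξ : ℝ) : ℂ :=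
  ∫ x : ℝ, Complex.exp (-(2 * Real.pi * Complex.I * x * ξ)) ∂μ

/-- The mask polynomial `m_E(t) = (1/#E) ∑_{d ∈ E} e^{2πidt}`. -/
def mask (E : Finset ℕ) (t : ℝ) : ℂ :=
  (E.card : ℂ)⁻¹ * ∑ d ∈ E, Complex.exp (2 * Real.pi * Complex.I * (d : ℝ) * t)

end

/-!
If `1 < p i` for all `i` and all coefficients of `λ ∈ Λ_n` have modulus at most `1/2`, then
`|λ| + 1 ≤ P n`, so `|ξ + λ| ≤ P n`. Since the digits of `D (n + j + 2)` are at most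
`p (n + j + 2)`, every phase `d (ξ + λ) / P (n + j + 2)` is at most `1 / (2 ^ j * p (n + 1))` in
modulus. As `cos y ≥ 1 - y² / 2`, the `j`-th factor is then at least
`1 - 2π² / (4 ^ j * p (n + 1)²)`, and the Weierstrass product inequality bounds the product below by
`1 - 8π² / (3 * p (n + 1)²)`. Finally `#(D (n + 1)) ≥ 3` forces `p (n + 1) ≥ 6`: a proper multiple
of some `N > 3` is at least `8`, and in case (T2) the alternative `p (n + 1) = 3` is excluded by
`2 ≤ b < 2p/3`. This makes the bound larger than `1/4`.
-/

noncomputable section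

section UnitIntervalProducts

variable {ι R : Type*}

lemma one_sub_sum_one_sub_le_prod [CommRing R] [LinearOrder R] [IsStrictOrderedRing R]
    {s : Finset ι} {f : ι → R} (h0 : ∀ i ∈ s, 0 ≤ f i) (h1 : ∀ i ∈ s, f i ≤ 1) :
    1 - ∑ i ∈ s, (1 - f i) ≤ ∏ i ∈ s, f i := by
  induction s using Finset.cons_induction with
  | empty => simp
  | cons i s hi ih =>
    rw [Finset.forall_mem_cons] at h0 h1
    have hprod_le : ∏ j ∈ s, f j ≤ 1 := Finset.prod_le_one h0.2 h1.2
    have hcross : 0 ≤ (1 - f i) * (1 - ∏ j ∈ s, f j) :=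
      mul_nonneg (sub_nonneg.2 h1.1) (sub_nonneg.2 hprod_le)
    rw [Finset.sum_cons, Finset.prod_cons]
    linarith [ih h0.2 h1.2]

lemma multipliable_of_nonneg_of_le_one {f : ι → ℝ} (h0 : ∀ i, 0 ≤ f i) (h1 : ∀ i, f i ≤ 1) :
    Multipliable f := by
  classical
  have hanti : Antitone fun s : Finset ι => ∏ i ∈ s, f i := fun s t hst =>
    calc ∏ i ∈ t, f i = (∏ i ∈ t \ s, f i) * ∏ i ∈ s, f i := (Finset.prod_sdiff hst).symm
      _ ≤ ∏ i ∈ s, f i := mul_le_of_le_one_left (Finset.prod_nonneg fun i _ => h0 i)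
          (Finset.prod_le_one (fun i _ => h0 i) fun i _ => h1 i)
  have hbdd : BddBelow (Set.range fun s : Finset ι => ∏ i ∈ s, f i) :=
    ⟨0, Set.forall_mem_range.2 fun s => Finset.prod_nonneg fun i _ => h0 i⟩
  exact ⟨_, tendsto_atTop_ciInf hanti hbdd⟩

lemma one_sub_le_tprod_of_hasSum {f a : ι → ℝ} {S : ℝ} (h0 : ∀ i, 0 ≤ f i) (h1 : ∀ i, f i ≤ 1)
    (hfa : ∀ i, 1 - a i ≤ f i) (ha : HasSum a S) : 1 - S ≤ ∏' i, f i := by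
  refine ge_of_tendsto' (multipliable_of_nonneg_of_le_one h0 h1).hasProd fun s => ?_
  calc 1 - S ≤ 1 - ∑ i ∈ s, a i :=
        sub_le_sub_left (sum_le_hasSum s (fun i _ => by linarith [h1 i, hfa i]) ha) 1
    _ ≤ 1 - ∑ i ∈ s, (1 - f i) :=
        sub_le_sub_left (Finset.sum_le_sum fun i _ => by linarith [hfa i]) 1
    _ ≤ ∏ i ∈ s, f i := one_sub_sum_one_sub_le_prod (fun i _ => h0 i) fun i _ => h1 i

end UnitIntervalProducts

section MaskPolynomial

lemma mask_eq_sum_exp_ofReal_mul_I (E : Finset ℕ) (t : ℝ) :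
    mask E t = (E.card : ℂ)⁻¹ * ∑ d ∈ E, Complex.exp ((2 * π * (d * t) : ℝ) * Complex.I) := by
  unfold mask
  congr! 3
  push_cast
  ring

lemma norm_mask_le_one (E : Finset ℕ) (t : ℝ) : ‖mask E t‖ ≤ 1 := by
  have hsum : ‖∑ d ∈ E, Complex.exp ((2 * π * (d * t) : ℝ) * Complex.I)‖ ≤ E.card := by
    refine (norm_sum_le _ _).trans_eq ?_
    simp only [Complex.norm_exp_ofReal_mul_I, Finset.sum_const, nsmul_eq_mul, mul_one]
  rw [mask_eq_sum_exp_ofReal_mul_I, norm_mul, norm_inv, Complex.norm_natCast]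
  exact inv_mul_le_one_of_le₀ hsum (Nat.cast_nonneg _)

lemma re_mask (E : Finset ℕ) (t : ℝ) :
    (mask E t).re = (E.card : ℝ)⁻¹ * ∑ d ∈ E, cos (2 * π * (d * t)) := by
  rw [mask_eq_sum_exp_ofReal_mul_I, ← Complex.ofReal_natCast, ← Complex.ofReal_inv,
    Complex.re_ofReal_mul, Complex.re_sum]
  simp only [Complex.exp_ofReal_mul_I_re]

lemma one_sub_le_norm_mask {E : Finset ℕ} (hE : E.Nonempty) {t s : ℝ}
    (hs : ∀ d ∈ E, |(d : ℝ) * t| ≤ s) :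
    1 - 2 * π ^ 2 * s ^ 2 ≤ ‖mask E t‖ := by
  have hcos : ∀ d ∈ E, 1 - 2 * π ^ 2 * s ^ 2 ≤ cos (2 * π * (d * t)) := fun d hd =>
    calc 1 - 2 * π ^ 2 * s ^ 2 ≤ 1 - 2 * π ^ 2 * (d * t) ^ 2 := by
          gcongr 1 - 2 * π ^ 2 * ?_
          exact sq_le_sq' (abs_le.1 (hs d hd)).1 (abs_le.1 (hs d hd)).2
      _ = 1 - (2 * π * (d * t)) ^ 2 / 2 := by ring
      _ ≤ cos (2 * π * (d * t)) := one_sub_sq_div_two_le_cos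
  have hcard : (0 : ℝ) < E.card := by exact_mod_cast hE.card_pos
  calc 1 - 2 * π ^ 2 * s ^ 2 ≤ (E.card : ℝ)⁻¹ * ∑ d ∈ E, cos (2 * π * (d * t)) := by
        rw [le_inv_mul_iff₀ hcard, ← nsmul_eq_mul]
        exact Finset.card_nsmul_le_sum _ _ _ hcos
    _ = (mask E t).re := (re_mask E t).symm
    _ ≤ ‖mask E t‖ := Complex.re_le_norm _

end MaskPolynomial

section PartialProducts

variable {p : ℕ → ℕ}

lemma Pprod_succ (p : ℕ → ℕ) (n : ℕ) : Pprod p (n + 1) = Pprod p n * p (n + 1) :=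
  Finset.prod_Icc_succ_top (Nat.le_add_left 1 n) p

lemma Pprod_pos (hp : ∀ i, 1 ≤ i → 0 < p i) (n : ℕ) : 0 < Pprod p n :=
  Finset.prod_pos fun i hi => hp i (Finset.mem_Icc.1 hi).1

lemma Pprod_mul_two_pow_le (hp : ∀ i, 1 ≤ i → 1 < p i) (n j : ℕ) :
    Pprod p n * 2 ^ j ≤ Pprod p (n + j) := by
  induction j with
  | zero => simp
  | succ j ih =>
    rw [← add_assoc, Pprod_succ, pow_succ, ← mul_assoc]
    exact Nat.mul_le_mul ih (hp _ (Nat.le_add_left 1 _))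

lemma abs_sum_Pprod_mul_add_one_le (hp : ∀ i, 1 ≤ i → 1 < p i) {c : ℕ → ℝ}
    (hc : ∀ i, 1 ≤ i → |c i| ≤ 1 / 2) (n : ℕ) :
    |∑ i ∈ Finset.Icc 1 n, (Pprod p i : ℝ) * c i| + 1 ≤ Pprod p n := by
  induction n with
  | zero => simp [Pprod]
  | succ n ih =>
    have hone : 1 ≤ n + 1 := Nat.le_add_left 1 n
    have hdouble : (Pprod p n : ℝ) * 2 ≤ Pprod p (n + 1) := by
      exact_mod_cast Pprod_mul_two_pow_le hp n 1
    have hlast : |(Pprod p (n + 1) : ℝ) * c (n + 1)| ≤ Pprod p (n + 1) * (1 / 2) := by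
      rw [abs_mul, Nat.abs_cast]
      gcongr
      exact hc _ hone
    rw [Finset.sum_Icc_succ_top hone]
    linarith [abs_add_le (∑ i ∈ Finset.Icc 1 n, (Pprod p i : ℝ) * c i)
      (Pprod p (n + 1) * c (n + 1))]

lemma abs_digit_mul_div_Pprod_le (hp : ∀ i, 1 ≤ i → 1 < p i) {n j d : ℕ} {x : ℝ}
    (hx : |x| ≤ Pprod p n) (hd : d ≤ p (n + (j + 2))) :
    |(d : ℝ) * (x / Pprod p (n + (j + 2)))| ≤ 1 / (p (n + 1) * 2 ^ j) := by
  have hpos : ∀ i, 1 ≤ i → 0 < p i := fun i hi => zero_lt_one.trans (hp i hi)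
  have hgrowth : p (n + (j + 2)) * Pprod p n * (p (n + 1) * 2 ^ j) ≤ Pprod p (n + (j + 2)) :=
    calc p (n + (j + 2)) * Pprod p n * (p (n + 1) * 2 ^ j)
        = Pprod p (n + 1) * 2 ^ j * p (n + (j + 2)) := by rw [Pprod_succ]; ring
      _ ≤ Pprod p (n + 1 + j) * p (n + (j + 2)) :=
          Nat.mul_le_mul_right _ (Pprod_mul_two_pow_le hp (n + 1) j)
      _ = Pprod p (n + (j + 2)) := by
          rw [show n + (j + 2) = n + 1 + j + 1 by ring, Pprod_succ]
  have hP : (0 : ℝ) < Pprod p (n + (j + 2)) := by exact_mod_cast Pprod_pos hpos _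
  have hq : (0 : ℝ) < p (n + 1) := by exact_mod_cast hpos _ (Nat.le_add_left 1 n)
  rw [abs_mul, abs_div, Nat.abs_cast, Nat.abs_cast, ← mul_div_assoc,
    div_le_div_iff₀ hP (by positivity), one_mul]
  calc (d : ℝ) * |x| * (p (n + 1) * 2 ^ j)
      ≤ p (n + (j + 2)) * Pprod p n * (p (n + 1) * 2 ^ j) := by gcongr
    _ ≤ Pprod p (n + (j + 2)) := by exact_mod_cast hgrowth

end PartialProducts

section TailProduct

variable {p : ℕ → ℕ} {D : ℕ → Finset ℕ}

lemma hasSum_sq_one_div_mul_two_pow (q : ℝ) :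
    HasSum (fun j : ℕ => (1 / (q * 2 ^ j)) ^ 2) (4 / (3 * q ^ 2)) := by
  have hterm (j : ℕ) : (1 / (q * 2 ^ j)) ^ 2 = 1 / q ^ 2 * (1 / 4) ^ j := by
    have hpow : ((2 : ℝ) ^ j) ^ 2 = 4 ^ j := by
      rw [pow_right_comm]
      norm_num
    rw [div_pow, mul_pow, hpow, one_div_pow]
    ring
  have hvalue : 4 / (3 * q ^ 2) = 1 / q ^ 2 * (1 - 1 / 4)⁻¹ := by ring
  simp only [hterm, hvalue]
  exact (hasSum_geometric_of_lt_one (by norm_num) (by norm_num)).mul_left _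

theorem one_sub_le_tprod_norm_mask (hp : ∀ i, 1 ≤ i → 1 < p i) {n : ℕ} {x : ℝ}
    (hx : |x| ≤ Pprod p n) (hne : ∀ i, n + 1 < i → (D i).Nonempty)
    (hdigit : ∀ i, n + 1 < i → ∀ d ∈ D i, d ≤ p i) :
    1 - 8 * π ^ 2 / (3 * (p (n + 1) : ℝ) ^ 2) ≤
      ∏' j : ℕ, ‖mask (D (n + (j + 2))) (x / (Pprod p (n + (j + 2)) : ℝ))‖ := by
  have hsum : HasSum (fun j : ℕ => 2 * π ^ 2 * (1 / ((p (n + 1) : ℝ) * 2 ^ j)) ^ 2)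
      (8 * π ^ 2 / (3 * (p (n + 1) : ℝ) ^ 2)) := by
    have hvalue : 8 * π ^ 2 / (3 * (p (n + 1) : ℝ) ^ 2) =
        2 * π ^ 2 * (4 / (3 * (p (n + 1) : ℝ) ^ 2)) := by ring
    rw [hvalue]
    exact (hasSum_sq_one_div_mul_two_pow _).mul_left _
  refine one_sub_le_tprod_of_hasSum (fun _ => norm_nonneg _) (fun _ => norm_mask_le_one _ _)
    (fun j => ?_) hsum
  have hj : n + 1 < n + (j + 2) := by omega
  exact one_sub_le_norm_mask (hne _ hj) fun d hd =>
    abs_digit_mul_div_Pprod_le hp hx (hdigit _ hj d hd)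

end TailProduct

section FrequencySets

variable {p : ℕ → ℕ} {D : ℕ → Finset ℕ} {σ α : ℕ → ℤ}

lemma IsSigma.abs_div_two_pow_succ_le (hσ : IsSigma σ) (i k : ℕ) :
    |(σ i : ℝ) / 2 ^ (1 + k)| ≤ 1 / 2 := by
  have hσi : |(σ i : ℝ)| = 1 := by rcases hσ i with h | h <;> simp [h]
  rw [abs_div, hσi, abs_of_pos (by positivity)]
  exact one_div_le_one_div_of_le two_pos (le_self_pow₀ one_le_two (by omega))

lemma Admissible.abs_div_card_le (hα : Admissible D α) {m : ℕ} (hm : 1 ≤ m)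
    (hcard : 3 < (D m).card) : |(α m : ℝ) / (D m).card| ≤ 1 / 2 := by
  obtain ⟨hlower, hupper⟩ := hα m hm hcard
  have hα2 : |2 * α m| ≤ (D m).card := abs_le.2 ⟨by omega, by omega⟩
  have hα2' : |2 * (α m : ℝ)| ≤ (D m).card := by exact_mod_cast hα2
  have hpos : (0 : ℝ) < (D m).card := by exact_mod_cast zero_lt_three.trans hcard
  rw [abs_mul, abs_two] at hα2'
  rw [abs_div, Nat.abs_cast, div_le_iff₀ hpos]
  linarith

lemma abs_add_one_le_Pprod_of_mem_LamN (hp : ∀ i, 1 ≤ i → 1 < p i)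
    (hD : ∀ i, 1 ≤ i → 1 < (D i).card) (hσ : IsSigma σ) (hα : Admissible D α) {n : ℕ} {l : ℝ}
    (hl : l ∈ LamN p D σ α n) : |l| + 1 ≤ Pprod p n := by
  obtain ⟨c, hc2, hc3, hc4, rfl⟩ := hl
  refine abs_sum_Pprod_mul_add_one_le hp (fun i hi => ?_) n
  obtain hcard | hcard | hcard : (D i).card = 2 ∨ (D i).card = 3 ∨ 3 < (D i).card := by
    have := hD i hi
    omega
  · obtain h | h := hc2 i hcard
    · simp [h]
    · exact h ▸ hσ.abs_div_two_pow_succ_le i _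
  · obtain h | h | h := hc3 i hcard <;> norm_num [h]
  · exact hc4 i hcard ▸ hα.abs_div_card_le hi hcard

end FrequencySets

section DigitConditions

variable {p : ℕ → ℕ} {D : ℕ → Finset ℕ} {m : ℕ}

lemma SatisfiesT.one_lt_card (hT : SatisfiesT p D) (hm : 1 ≤ m) : 1 < (D m).card := by
  rcases hT.1 m hm with ⟨N, hN, -, -, hD⟩ | ⟨a, b, ha, -, -, -, -, hD⟩ | ⟨d, hd, -, -, hD⟩
  · rw [hD, Finset.card_range]
    omega
  · exact Finset.one_lt_card.2 ⟨0, by simp [hD], a, by simp [hD], ha.ne⟩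
  · rw [hD, Finset.card_pair hd.ne]
    exact one_lt_two

lemma SatisfiesT.three_mul_digit_lt_of_T2cond (hT : SatisfiesT p D) (hm : 1 ≤ m) (hpm : 0 < p m)
    (h2 : T2cond p D m) {d : ℕ} (hd : d ∈ D m) : 3 * d < 2 * p m := by
  obtain ⟨c, hc, hsup⟩ := hT.2
  have hpm' : (0 : ℝ) < p m := by exact_mod_cast hpm
  have hd_le : (d : ℝ) ≤ ((D m).sup id : ℕ) := by exact_mod_cast Finset.le_sup (f := id) hd
  have hlt : (d : ℝ) < 2 / 3 * p m :=
    calc (d : ℝ) ≤ ((D m).sup id : ℕ) := hd_le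
      _ ≤ c * p m := (div_le_iff₀ hpm').1 (hsup m hm h2)
      _ < 2 / 3 * p m := by gcongr
  have hlt' : (3 * d : ℝ) < 2 * p m := by linarith
  exact_mod_cast hlt'

lemma SatisfiesT.digit_lt (hT : SatisfiesT p D) (hm : 1 ≤ m) (hpm : 0 < p m) {d : ℕ}
    (hd : d ∈ D m) : d < p m := by
  rcases hT.1 m hm with ⟨N, -, -, hNp, hD⟩ | h2 | ⟨e, -, hep, -, hD⟩
  · rw [hD, Finset.mem_range] at hd
    exact hd.trans hNp
  · have := hT.three_mul_digit_lt_of_T2cond hm hpm h2 hd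
    omega
  · rw [hD, Finset.mem_insert, Finset.mem_singleton] at hd
    obtain rfl | rfl := hd
    exacts [hpm, hep]

lemma SatisfiesT.six_le_of_three_le_card (hT : SatisfiesT p D) (hm : 1 ≤ m) (hpm : 0 < p m)
    (hcard : 3 ≤ (D m).card) : 6 ≤ p m := by
  rcases hT.1 m hm with ⟨N, hN, hdvd, hNp, -⟩ | h2 | ⟨d, hd, -, -, hD⟩
  · have : N ≤ p m - N := Nat.le_of_dvd (Nat.sub_pos_of_lt hNp) (Nat.dvd_sub hdvd dvd_rfl)
    omega
  · have hlt {d : ℕ} (hd : d ∈ D m) := hT.three_mul_digit_lt_of_T2cond hm hpm h2 hd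
    obtain ⟨a, b, ha, hab, -, -, hdvd, hD⟩ := h2
    have hb : 3 * b < 2 * p m := hlt (by simp [hD])
    omega
  · rw [hD, Finset.card_pair hd.ne] at hcard
    omega

end DigitConditions

theorem tail_product_lower_bound_general {p : ℕ → ℕ} {D : ℕ → Finset ℕ}
    (hp : ∀ i, 1 ≤ i → 1 < p i) (hT : SatisfiesT p D) {n : ℕ} (h3 : 3 ≤ (D (n + 1)).card)
    {ξ : ℝ} (hξ : |ξ| ≤ 1) {σ α : ℕ → ℤ} (hσ : IsSigma σ) (hα : Admissible D α)
    {l : ℝ} (hl : l ∈ LamN p D σ α n) :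
    1 / 4 < ∏' j : ℕ, ‖mask (D (n + (j + 2))) ((ξ + l) / (Pprod p (n + (j + 2)) : ℝ))‖ := by
  have hpos : ∀ i, 1 ≤ i → 0 < p i := fun i hi => zero_lt_one.trans (hp i hi)
  have hcard : ∀ i, 1 ≤ i → 1 < (D i).card := fun i hi => hT.one_lt_card hi
  have hx : |ξ + l| ≤ Pprod p n := by
    linarith [abs_add_le ξ l, abs_add_one_le_Pprod_of_mem_LamN hp hcard hσ hα hl]
  have h6 : (6 : ℝ) ≤ p (n + 1) := by
    have hone : 1 ≤ n + 1 := Nat.le_add_left 1 n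
    exact_mod_cast hT.six_le_of_three_le_card hone (hpos _ hone) h3
  have hπ : π ^ 2 < 10 := by nlinarith [pi_lt_d2, pi_pos]
  calc (1 / 4 : ℝ) < 1 - 8 * 10 / (3 * 6 ^ 2) := by norm_num
    _ ≤ 1 - 8 * π ^ 2 / (3 * (p (n + 1) : ℝ) ^ 2) := by gcongr
    _ ≤ _ := one_sub_le_tprod_norm_mask hp hx
        (fun i hi => Finset.card_pos.1 (zero_lt_one.trans (hcard i (by omega))))
        fun i hi d hd => (hT.digit_lt (by omega) (hpos i (by omega)) hd).le

/-- Proposition 4.4. If `n_k > 7` and `#(D (n_k + 1)) ≥ 3`, then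
the tail products `∏_{j=2}^∞ |m_{D_{n_k+j}}((ξ+λ)/P_{n_k+j})|` are bounded below by a
uniform `ε > 0` for `|ξ| < 1` and `λ ∈ Λ_{n_k}^{σ,α}`. -/
theorem tail_product_lower_bound (p : ℕ → ℕ) (D : ℕ → Finset ℕ)
    (hp : ∀ n, 1 ≤ n → 1 < p n) (hT : SatisfiesT p D)
    (n : ℕ → ℕ) (hmono : StrictMono n) (h7 : ∀ k, 7 < n k)
    (h3 : ∀ k, 3 ≤ (D (n k + 1)).card) :
    ∃ ε : ℝ, 0 < ε ∧ ∀ k, ∀ ξ : ℝ, |ξ| < 1 →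
      ∀ σ α : ℕ → ℤ, IsSigma σ → Admissible D α → ∀ l ∈ LamN p D σ α (n k),
        ε < ∏' j : ℕ, ‖mask (D (n k + (j + 2))) ((ξ + l) / (Pprod p (n k + (j + 2)) : ℝ))‖ := by
  exact ⟨1 / 4, by norm_num, fun k ξ hξ σ α hσ hα l hl =>
    tail_product_lower_bound_general hp hT (h3 k) hξ.le hσ hα hl⟩

end
end

section
/- Let (p_n)_{n≥1} be a sequence of nonzero integers with |p_n| > 1 and (𝒟_n)_{n≥1} a sequence of finite subsets of ℤ containing 0, with sup_n max_{d∈𝒟_n} |d|/|p_n| < ∞. Let θ_n ∈ {−1,1} and γ_n ∈ {0, max_{d∈𝒟_n}|d|} for each n. Then for all ξ ∈ ℝ, |μ̂_{(θ_n p_n),(𝒟_n+γ_n)}(ξ)| = |μ̂_{(p_n),(𝒟_n)}(ξ)|; consequently μ_{(p_n),(𝒟_n)} is a spectral measure if and only if μ_{(θ_n p_n),(𝒟_n+γ_n)} is a spectral measure. -/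
open MeasureTheory Filter Finset Real
open scoped ENNReal NNReal

noncomputable section

/-- `Q n = q 1 * ⋯ * q n` for an integer sequence. -/
def PprodZ (q : ℕ → ℤ) (n : ℕ) : ℤ := ∏ i ∈ Finset.Icc 1 n, q i

/-- Uniform probability measure on `s • E ⊆ ℝ` for a finite set of integers. -/
def unifDZ (E : Finset ℤ) (s : ℝ) : Measure ℝ :=
  (E.card : ℝ≥0∞)⁻¹ • ∑ d ∈ E, Measure.dirac (s * (d : ℝ))

/-- The finite convolutions `δ_{Q₁⁻¹E₁} ∗ ⋯ ∗ δ_{Qₙ⁻¹Eₙ}`. -/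
def muNZ (q : ℕ → ℤ) (E : ℕ → Finset ℤ) : ℕ → Measure ℝ
  | 0 => Measure.dirac 0
  | n + 1 => Measure.conv (muNZ q E n) (unifDZ (E (n + 1)) ((PprodZ q (n + 1) : ℝ)⁻¹))

/-- `μ` is the Moran measure of the integer data `(q, E)`. -/
def IsMoranZ (q : ℕ → ℤ) (E : ℕ → Finset ℤ) (μ : Measure ℝ) : Prop :=
  IsProbabilityMeasure μ ∧ IsWeakLimit (muNZ q E) μ

/-!
For orthonormal exponentials, `Λ` is a spectrum of `μ` iff Parseval's identity
`∑ |μ̂(λ - ξ)|² = 1` holds for every exponential `e_ξ`, because all exponentials together are total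
in `L²(μ)` (uniqueness of the Fourier transform). Orthogonality of `e_λ` and `e_λ'` means
`μ̂(λ - λ') = 0`, so being a spectrum depends on `|μ̂|` only. A change of signs and a translation of
the digits replace each convolution factor by its image under some `x ↦ ±x + c`; this conjugates the
Fourier transform of the factor or multiplies it by a phase, so `|μ̂|` survives in the limit.
-/

section HilbertSpace

open Submodule

variable {𝕜 H ι : Type*} [RCLike 𝕜] [NormedAddCommGroup H] [InnerProductSpace 𝕜 H]
  {v : ι → H}

lemma mem_span_orthogonal_iff {S : Set H} {y : H} :
    y ∈ (span 𝕜 S)ᗮ ↔ ∀ x ∈ S, inner 𝕜 x y = 0 := by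
  refine ⟨fun hy x hx => (mem_orthogonal _ y).1 hy x (subset_span hx), fun hy => ?_⟩
  have span_le_orthogonal : span 𝕜 S ≤ (𝕜 ∙ y)ᗮ :=
    span_le.2 fun x hx => mem_orthogonal_singleton_iff_inner_left.2 (hy x hx)
  exact (mem_orthogonal _ y).2 fun x hx =>
    mem_orthogonal_singleton_iff_inner_left.1 (span_le_orthogonal hx)

lemma norm_sub_sum_inner_smul_sq (hv : Orthonormal 𝕜 v) (x : H) (s : Finset ι) :
    ‖x - ∑ i ∈ s, inner 𝕜 (v i) x • v i‖ ^ 2 = ‖x‖ ^ 2 - ∑ i ∈ s, ‖inner 𝕜 (v i) x‖ ^ 2 := by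
  set y := ∑ i ∈ s, inner 𝕜 (v i) x • v i
  have inner_y (z : H) :
      inner 𝕜 y z = ∑ i ∈ s, starRingEnd 𝕜 (inner 𝕜 (v i) x) * inner 𝕜 (v i) z := by
    simp only [y, sum_inner, inner_smul_left]
  have inner_y_x : inner 𝕜 y x = ((∑ i ∈ s, ‖inner 𝕜 (v i) x‖ ^ 2 : ℝ) : 𝕜) := by
    simp only [inner_y, RCLike.conj_mul]
    push_cast
    rfl
  have inner_y_y : inner 𝕜 y y = inner 𝕜 y x := by
    rw [inner_y, inner_y]
    refine Finset.sum_congr rfl fun i hi => ?_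
    rw [hv.inner_right_sum _ hi]
  rw [norm_sub_sq (𝕜 := 𝕜), ← inner_re_symm, norm_sq_eq_re_inner (𝕜 := 𝕜) y, inner_y_y, inner_y_x,
    RCLike.ofReal_re]
  ring

lemma hasSum_inner_smul_of_hasSum_norm_inner_sq (hv : Orthonormal 𝕜 v) {x : H}
    (h : HasSum (fun i => ‖inner 𝕜 (v i) x‖ ^ 2) (‖x‖ ^ 2)) :
    HasSum (fun i => inner 𝕜 (v i) x • v i) x := by
  have sq_dist : Tendsto (fun s : Finset ι => ‖x - ∑ i ∈ s, inner 𝕜 (v i) x • v i‖ ^ 2)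
      atTop (nhds 0) := by
    simp only [norm_sub_sum_inner_smul_sq hv]
    rw [← sub_self (‖x‖ ^ 2)]
    exact Tendsto.const_sub _ h
  have dist := sq_dist.sqrt
  simp only [Real.sqrt_sq (norm_nonneg _), Real.sqrt_zero] at dist
  rw [HasSum, tendsto_iff_norm_sub_tendsto_zero]
  simpa only [norm_sub_rev, SummationFilter.unconditional_filter] using dist

lemma hasSum_norm_inner_sq [CompleteSpace H] (hv : Orthonormal 𝕜 v)
    (htop : (span 𝕜 (Set.range v))ᗮ = ⊥) (x : H) :
    HasSum (fun i => ‖inner 𝕜 (v i) x‖ ^ 2) (‖x‖ ^ 2) := by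
  have h := (HilbertBasis.mkOfOrthogonalEqBot hv htop).hasSum_inner_mul_inner x x
  simp only [HilbertBasis.coe_mkOfOrthogonalEqBot, inner_self_eq_norm_sq_to_K,
    ← inner_conj_symm x, RCLike.conj_mul] at h
  exact_mod_cast h

lemma span_range_orthogonal_eq_bot_iff [CompleteSpace H] (hv : Orthonormal 𝕜 v) {S : Set H}
    (hS : (span 𝕜 S)ᗮ = ⊥) :
    (span 𝕜 (Set.range v))ᗮ = ⊥ ↔
      ∀ x ∈ S, HasSum (fun i => ‖inner 𝕜 (v i) x‖ ^ 2) (‖x‖ ^ 2) := by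
  refine ⟨fun htop x _ => hasSum_norm_inner_sq hv htop x, fun hsum => ?_⟩
  rw [eq_bot_iff, ← hS]
  intro y hy
  refine mem_span_orthogonal_iff.2 fun x hx => inner_eq_zero_symm.1 ?_
  have inner_v (i : ι) : inner 𝕜 y (v i) = 0 :=
    (mem_orthogonal' _ y).1 hy _ (subset_span ⟨i, rfl⟩)
  have expansion := (innerSL 𝕜 y).hasSum
    (hasSum_inner_smul_of_hasSum_norm_inner_sq hv (hsum x hx))
  simp only [map_smul, innerSL_apply_apply, inner_v, smul_zero] at expansion
  exact expansion.unique hasSum_zero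

end HilbertSpace

section FourierUniqueness

open FourierTransform
open scoped SchwartzMap RealInnerProductSpace ContDiff

variable {V F : Type*} [NormedAddCommGroup V] [InnerProductSpace ℝ V] [FiniteDimensional ℝ V]
  [MeasurableSpace V] [BorelSpace V] [NormedAddCommGroup F] [NormedSpace ℂ F] [CompleteSpace F]

lemma ae_eq_zero_of_fourierIntegral_eq_zero {μ : Measure V} [SigmaFinite μ] {f : V → F}
    (hf : Integrable f μ) (h : VectorFourier.fourierIntegral 𝐞 μ (innerₗ V) f = 0) :
    f =ᵐ[μ] 0 := by
  refine ae_eq_zero_of_integral_contDiff_smul_eq_zero hf.locallyIntegrable fun g hg hgc => ?_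
  -- By self-adjointness `∫ (𝓕 φ) • f ∂μ = ∫ φ • (𝓕 f)`, applied to `φ = 𝓕⁻ g`.
  let ψ : 𝓢(V, ℂ) := (hgc.comp_left Complex.ofReal_zero).toSchwartzMap
    (Complex.ofRealCLM.contDiff.comp hg)
  have hψ (x : V) :
      VectorFourier.fourierIntegral 𝐞 volume (innerₗ V) (𝓕⁻ ψ : 𝓢(V, ℂ)) x = (g x : ℂ) :=
    congrFun ((SchwartzMap.fourier_coe _).symm.trans
      (congrArg DFunLike.coe (FourierTransform.fourier_fourierInv_eq ψ))) x
  have flip := VectorFourier.integral_bilin_fourierIntegral_eq_flip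
    (ContinuousLinearMap.lsmul ℂ ℂ (E := F)).flip Real.continuous_fourierChar
    (L := innerₗ V) continuous_inner hf ((𝓕⁻ ψ : 𝓢(V, ℂ)).integrable (μ := volume))
  simpa only [h, hψ, Pi.zero_apply, flip_innerₗ, ContinuousLinearMap.lsmul_flip_apply,
    ContinuousLinearMap.toSpanSingleton_zero, ContinuousLinearMap.toSpanSingleton_apply,
    zero_apply, integral_zero, Complex.coe_smul, eq_comm] using flip

end FourierUniqueness

section Exponentials

open Submodule FourierTransform
open scoped BoundedContinuousFunction

lemma FT_eq_charFun (μ : Measure ℝ) (ξ : ℝ) : FT μ ξ = charFun μ (-(2 * π * ξ)) := by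
  rw [charFun_apply_real, FT]
  congr! 3 with x
  push_cast
  ring

variable (μ : Measure ℝ) [IsFiniteMeasure μ]

/-- The exponential `e_ξ : x ↦ e^{2πiξx}` as an element of `L²(μ)`, so that
orthonormality and totality of exponentials become statements about a Hilbert space. -/
def expLp (ξ : ℝ) : Lp ℂ 2 μ :=
  BoundedContinuousFunction.toLp 2 μ ℂ (BoundedContinuousFunction.innerProbChar (2 * π * ξ))

lemma coeFn_expLp (ξ : ℝ) :
    expLp μ ξ =ᵐ[μ] fun x => Complex.exp (2 * π * Complex.I * ξ * x) := by
  filter_upwards [BoundedContinuousFunction.coeFn_toLp 2 μ ℂ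
    (BoundedContinuousFunction.innerProbChar (2 * π * ξ))] with x hx
  rw [expLp, hx, BoundedContinuousFunction.innerProbChar_apply]
  simp only [RCLike.inner_apply, conj_trivial, Complex.ofReal_mul, Complex.ofReal_ofNat]
  ring_nf

lemma inner_expLp (ξ : ℝ) (F : Lp ℂ 2 μ) :
    inner ℂ (expLp μ ξ) F = ∫ x, F x * Complex.exp (-(2 * π * Complex.I * ξ * x)) ∂μ := by
  rw [L2.inner_def]
  refine integral_congr_ae ?_
  filter_upwards [coeFn_expLp μ ξ] with x hx
  rw [hx, RCLike.inner_apply, ← Complex.exp_conj]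
  simp only [map_mul, Complex.conj_ofNat, Complex.conj_ofReal, Complex.conj_I, mul_neg, neg_mul]

lemma inner_expLp_expLp (a b : ℝ) : inner ℂ (expLp μ a) (expLp μ b) = FT μ (a - b) := by
  rw [inner_expLp, FT]
  refine integral_congr_ae ?_
  filter_upwards [coeFn_expLp μ b] with x hx
  rw [hx, ← Complex.exp_add]
  congr 1
  push_cast
  ring

lemma inner_expLp_eq_fourierIntegral (ξ : ℝ) (F : Lp ℂ 2 μ) :
    inner ℂ (expLp μ ξ) F = VectorFourier.fourierIntegral 𝐞 μ (innerₗ ℝ) F ξ := by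
  rw [inner_expLp, VectorFourier.fourierIntegral]
  congr! 2 with x
  rw [Circle.smul_def, Real.fourierChar_apply, smul_eq_mul, mul_comm]
  congr 2
  rw [innerₗ_apply_apply, RCLike.inner_apply, conj_trivial]
  push_cast
  ring

lemma span_range_expLp_orthogonal : (span ℂ (Set.range (expLp μ)))ᗮ = ⊥ := by
  refine (Submodule.eq_bot_iff _).2 fun F hF => Lp.eq_zero_iff_ae_eq_zero.2 ?_
  refine ae_eq_zero_of_fourierIntegral_eq_zero ((Lp.memLp F).integrable one_le_two) ?_
  ext ξ
  rw [← inner_expLp_eq_fourierIntegral]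
  exact mem_span_orthogonal_iff.1 hF _ ⟨ξ, rfl⟩

end Exponentials

section Spectrum

open Submodule

lemma isOrthSet_iff_pairwise (μ : Measure ℝ) (Λ : Set ℝ) :
    IsOrthSet μ Λ ↔ Λ.Pairwise fun l l' => FT μ (l - l') = 0 := by
  have integral_eq (l l' : ℝ) :
      ∫ x : ℝ, Complex.exp (2 * π * Complex.I * (l - l') * x) ∂μ = FT μ (l' - l) := by
    rw [FT]
    congr! 3 with x
    push_cast
    ring
  simp only [IsOrthSet, integral_eq]
  exact ⟨fun h l hl l' hl' hne => h l' hl' l hl hne.symm,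
    fun h l hl l' hl' hne => h hl' hl hne.symm⟩

lemma isSpectrum_iff_isOrthSet_and_orthogonal_eq_bot (μ : Measure ℝ) [IsFiniteMeasure μ]
    (Λ : Set ℝ) :
    IsSpectrum μ Λ ↔
      IsOrthSet μ Λ ∧ (span ℂ (Set.range fun l : Λ => expLp μ l))ᗮ = ⊥ := by
  have mem_iff (F : Lp ℂ 2 μ) : F ∈ (span ℂ (Set.range fun l : Λ => expLp μ l))ᗮ ↔
      ∀ l ∈ Λ, ∫ x, F x * Complex.exp (-(2 * π * Complex.I * l * x)) ∂μ = 0 := by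
    rw [mem_span_orthogonal_iff, Set.forall_mem_range]
    simp only [inner_expLp, Subtype.forall]
  refine and_congr_right fun _ => ⟨fun complete => ?_, fun total f hf hfΛ => ?_⟩
  · refine (Submodule.eq_bot_iff _).2 fun F hF => Lp.eq_zero_iff_ae_eq_zero.2 ?_
    exact complete F (Lp.memLp F) ((mem_iff F).1 hF)
  · have toLp_mem : hf.toLp f ∈ (span ℂ (Set.range fun l : Λ => expLp μ l))ᗮ := by
      refine (mem_iff _).2 fun l hl => ?_
      rw [← hfΛ l hl]
      refine integral_congr_ae ?_
      filter_upwards [hf.coeFn_toLp] with x hx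
      rw [hx]
    rw [total, Submodule.mem_bot, Lp.eq_zero_iff_ae_eq_zero] at toLp_mem
    exact hf.coeFn_toLp.symm.trans toLp_mem

variable (μ : Measure ℝ) [IsProbabilityMeasure μ]

lemma norm_expLp (ξ : ℝ) : ‖expLp μ ξ‖ = 1 := by
  have FT_zero : FT μ 0 = 1 := by
    rw [FT_eq_charFun, mul_zero, neg_zero, charFun_zero, probReal_univ, Complex.ofReal_one]
  rw [norm_eq_sqrt_re_inner (𝕜 := ℂ), inner_expLp_expLp, sub_self, FT_zero, RCLike.one_re,
    Real.sqrt_one]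

lemma orthonormal_expLp_iff {Λ : Set ℝ} :
    Orthonormal ℂ (fun l : Λ => expLp μ l) ↔ Λ.Pairwise fun l l' => FT μ (l - l') = 0 := by
  simp only [Orthonormal, norm_expLp, implies_true, true_and, Pairwise, inner_expLp_expLp,
    Set.Pairwise, Subtype.forall, ne_eq, Subtype.mk.injEq]

/-- The Jorgensen–Pedersen criterion. -/
theorem isSpectrum_iff_hasSum_norm_FT_sq (Λ : Set ℝ) :
    IsSpectrum μ Λ ↔ (Λ.Pairwise fun l l' => FT μ (l - l') = 0) ∧
      ∀ ξ, HasSum (fun l : Λ => ‖FT μ (l - ξ)‖ ^ 2) 1 := by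
  rw [isSpectrum_iff_isOrthSet_and_orthogonal_eq_bot, isOrthSet_iff_pairwise]
  refine and_congr_right fun hΛ => ?_
  rw [span_range_orthogonal_eq_bot_iff ((orthonormal_expLp_iff μ).2 hΛ)
    (span_range_expLp_orthogonal μ), Set.forall_mem_range]
  simp only [inner_expLp_expLp, norm_expLp, one_pow]

variable {μ} {μ' : Measure ℝ} [IsProbabilityMeasure μ']

theorem isSpectralMeasure_congr_of_norm_FT_eq (h : ∀ ξ, ‖FT μ' ξ‖ = ‖FT μ ξ‖) :
    IsSpectralMeasure μ ↔ IsSpectralMeasure μ' := by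
  simp only [IsSpectralMeasure, isSpectrum_iff_hasSum_norm_FT_sq, ← norm_eq_zero (a := FT _ _), h]

end Spectrum

section PartialConvolutions

/-- The partial convolution `ν 0 ∗ ⋯ ∗ ν (n - 1)` of the infinite convolution of the measures
`ν i`; the factors are indexed from `0`, so that the empty convolution sits at `n = 0`. -/
def partialConv {M : Type*} [AddMonoid M] [MeasurableSpace M] (ν : ℕ → Measure M) :
    ℕ → Measure M
  | 0 => Measure.dirac 0
  | n + 1 => Measure.conv (partialConv ν n) (ν n)

instance isFiniteMeasure_partialConv {M : Type*} [AddMonoid M] [MeasurableSpace M]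
    (ν : ℕ → Measure M) [∀ n, IsFiniteMeasure (ν n)] (n : ℕ) :
    IsFiniteMeasure (partialConv ν n) := by
  induction n with
  | zero => exact inferInstanceAs (IsFiniteMeasure (Measure.dirac 0))
  | succ n ih => exact inferInstanceAs (IsFiniteMeasure (Measure.conv _ _))

lemma charFun_partialConv {V : Type*} [NormedAddCommGroup V] [InnerProductSpace ℝ V]
    [MeasurableSpace V] [BorelSpace V] [SecondCountableTopology V] (ν : ℕ → Measure V)
    [∀ n, IsFiniteMeasure (ν n)] (n : ℕ) (t : V) :
    charFun (partialConv ν n) t = ∏ i ∈ Finset.range n, charFun (ν i) t := by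
  induction n with
  | zero => simp [partialConv]
  | succ n ih => rw [partialConv, charFun_conv, ih, Finset.prod_range_succ]

lemma norm_charFun_map_mul_add (ν : Measure ℝ) {ε : ℝ} (hε : |ε| = 1) (c t : ℝ) :
    ‖charFun (ν.map fun x => ε * x + c) t‖ = ‖charFun ν t‖ := by
  have map_comp : (ν.map fun x => ε * x + c) = (ν.map (ε * ·)).map (· + c) :=
    (Measure.map_map (measurable_add_const c) (measurable_const_mul ε)).symm
  rw [map_comp, charFun_map_add_const, charFun_map_mul, norm_mul, Complex.norm_exp_ofReal_mul_I,
    mul_one]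
  rcases eq_or_eq_neg_of_abs_eq hε with rfl | rfl
  · rw [one_mul]
  · rw [neg_one_mul, charFun_neg, RCLike.norm_conj]

lemma tendsto_charFun_of_isWeakLimit {ν : ℕ → Measure ℝ} [hν : ∀ n, IsFiniteMeasure (ν n)]
    {μ : Measure ℝ} [hμ : IsFiniteMeasure μ] (h : IsWeakLimit ν μ) (t : ℝ) :
    Tendsto (fun n => charFun (ν n) t) atTop (nhds (charFun μ t)) := by
  have weak : Tendsto (β := FiniteMeasure ℝ) (fun n => ⟨ν n, hν n⟩) atTop (nhds ⟨μ, hμ⟩) :=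
    FiniteMeasure.tendsto_iff_forall_integral_tendsto.2 h
  simp only [charFun_eq_integral_innerProbChar]
  exact (FiniteMeasure.tendsto_iff_forall_integral_rclike_tendsto ℂ).1 weak _

theorem norm_FT_eq_of_isWeakLimit_partialConv {ν : ℕ → Measure ℝ} [∀ n, IsFiniteMeasure (ν n)]
    {ε c : ℕ → ℝ} (hε : ∀ n, |ε n| = 1) {μ μ' : Measure ℝ} [IsFiniteMeasure μ]
    [IsFiniteMeasure μ'] (hμ : IsWeakLimit (partialConv ν) μ)
    (hμ' : IsWeakLimit (partialConv fun n => (ν n).map fun x => ε n * x + c n) μ') (ξ : ℝ) :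
    ‖FT μ' ξ‖ = ‖FT μ ξ‖ := by
  have lim := (tendsto_charFun_of_isWeakLimit hμ (-(2 * π * ξ))).norm
  have lim' := (tendsto_charFun_of_isWeakLimit hμ' (-(2 * π * ξ))).norm
  simp only [charFun_partialConv, norm_prod, norm_charFun_map_mul_add _ (hε _)] at lim lim'
  rw [FT_eq_charFun, FT_eq_charFun]
  exact tendsto_nhds_unique lim' lim

theorem spectrality_invariance_general {ν : ℕ → Measure ℝ} [∀ n, IsFiniteMeasure (ν n)]
    {ε c : ℕ → ℝ} (hε : ∀ n, |ε n| = 1) {μ μ' : Measure ℝ} [IsProbabilityMeasure μ]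
    [IsProbabilityMeasure μ'] (hμ : IsWeakLimit (partialConv ν) μ)
    (hμ' : IsWeakLimit (partialConv fun n => (ν n).map fun x => ε n * x + c n) μ') :
    (∀ ξ : ℝ, ‖FT μ' ξ‖ = ‖FT μ ξ‖) ∧ (IsSpectralMeasure μ ↔ IsSpectralMeasure μ') :=
  have norm_FT_eq := norm_FT_eq_of_isWeakLimit_partialConv hε hμ hμ'
  ⟨norm_FT_eq, isSpectralMeasure_congr_of_norm_FT_eq norm_FT_eq⟩

end PartialConvolutions

section MoranMeasures

instance isFiniteMeasure_unifDZ (E : Finset ℤ) (s : ℝ) : IsFiniteMeasure (unifDZ E s) := by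
  rcases E.eq_empty_or_nonempty with rfl | hE
  · rw [unifDZ, Finset.sum_empty, smul_zero]
    infer_instance
  · have : (E.card : ℝ≥0∞) ≠ 0 := Nat.cast_ne_zero.2 hE.card_ne_zero
    exact Measure.smul_finite _ (ENNReal.inv_ne_top.2 this)

lemma unifDZ_image_add (E : Finset ℤ) (g : ℤ) (ε s : ℝ) :
    unifDZ (E.image (· + g)) (ε * s) = (unifDZ E s).map fun x => ε * x + ε * s * g := by
  have add_injective : Function.Injective (· + g) := add_left_injective g
  have measurable : Measurable fun x : ℝ => ε * x + ε * s * g := by fun_prop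
  rw [unifDZ, unifDZ, Finset.card_image_of_injective _ add_injective,
    Finset.sum_image add_injective.injOn, Measure.map_smul,
    Measure.map_finset_sum measurable.aemeasurable]
  simp only [Measure.map_dirac' measurable]
  refine congrArg _ (Finset.sum_congr rfl fun d _ => congrArg _ ?_)
  push_cast
  ring

lemma muNZ_eq_partialConv (q : ℕ → ℤ) (E : ℕ → Finset ℤ) :
    muNZ q E = partialConv fun n => unifDZ (E (n + 1)) (PprodZ q (n + 1) : ℝ)⁻¹ := by
  ext1 n
  induction n with
  | zero => rfl
  | succ n ih => rw [muNZ, partialConv, ih]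

lemma PprodZ_mul (θ q : ℕ → ℤ) (n : ℕ) :
    PprodZ (fun n => θ n * q n) n = PprodZ θ n * PprodZ q n :=
  Finset.prod_mul_distrib

lemma abs_PprodZ_eq_one {θ : ℕ → ℤ} (hθ : ∀ n, θ n = 1 ∨ θ n = -1) (n : ℕ) :
    |(PprodZ θ n : ℝ)| = 1 := by
  rw [PprodZ, Int.cast_prod, Finset.abs_prod]
  refine Finset.prod_eq_one fun i _ => ?_
  rcases hθ i with h | h <;> simp [h]

lemma inv_eq_self_of_abs_eq_one {K : Type*} [Field K] [LinearOrder K] {ε : K}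
    (hε : |ε| = 1) : ε⁻¹ = ε := by
  rcases eq_or_eq_neg_of_abs_eq hε with rfl | rfl <;> simp

lemma muNZ_sign_mul_image_add (q : ℕ → ℤ) (E : ℕ → Finset ℤ) {θ : ℕ → ℤ}
    (hθ : ∀ n, θ n = 1 ∨ θ n = -1) (γ : ℕ → ℤ) :
    muNZ (fun n => θ n * q n) (fun n => (E n).image fun d => d + γ n) =
      partialConv fun n => (unifDZ (E (n + 1)) (PprodZ q (n + 1) : ℝ)⁻¹).map fun x =>
        PprodZ θ (n + 1) * x + PprodZ θ (n + 1) * (PprodZ q (n + 1) : ℝ)⁻¹ * γ (n + 1) := by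
  rw [muNZ_eq_partialConv]
  congr! 2 with n
  rw [PprodZ_mul, Int.cast_mul, mul_inv, inv_eq_self_of_abs_eq_one (abs_PprodZ_eq_one hθ _),
    unifDZ_image_add]

end MoranMeasures

/-- Lemma 2.2. Flipping signs of the `p_n` and translating the
digit sets by `γ_n ∈ {0, max |D_n|}` does not change `|μ̂|`; consequently one
measure is spectral iff the other is. -/
theorem spectrality_invariance (q : ℕ → ℤ) (E : ℕ → Finset ℤ)
    (hq : ∀ n, 1 ≤ n → 1 < |q n|) (h0 : ∀ n, 1 ≤ n → (0 : ℤ) ∈ E n)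
    (hbd : ∃ C : ℝ, ∀ n, 1 ≤ n → ∀ d ∈ E n, |(d : ℝ)| ≤ C * |(q n : ℝ)|)
    (θ γ : ℕ → ℤ) (hθ : ∀ n, θ n = 1 ∨ θ n = -1)
    (hγ : ∀ n, 1 ≤ n → γ n = 0 ∨ γ n = (((E n).sup (fun d => d.natAbs) : ℕ) : ℤ))
    (μ μ' : Measure ℝ) (hμ : IsMoranZ q E μ)
    (hμ' : IsMoranZ (fun n => θ n * q n) (fun n => (E n).image (fun d => d + γ n)) μ') :
    (∀ ξ : ℝ, ‖FT μ' ξ‖ = ‖FT μ ξ‖) ∧ (IsSpectralMeasure μ ↔ IsSpectralMeasure μ') := by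
  rw [IsMoranZ, muNZ_eq_partialConv] at hμ
  rw [IsMoranZ, muNZ_sign_mul_image_add q E hθ γ] at hμ'
  obtain ⟨_, limit⟩ := hμ
  obtain ⟨_, limit'⟩ := hμ'
  exact spectrality_invariance_general (fun n => abs_PprodZ_eq_one hθ (n + 1)) limit limit'

end
end
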